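/- The number of ways to fill a 4×4 grid with values in {1,2,3,4} such that every row, every column, and each of the four 2×2 corner blocks contains all four values exactly once, is 288. -/

import Mathlib

/-!
Relabelling the values by a permutation of `Fin 4` preserves the Su-Doku conditions, and exactly one
relabelling of a given grid makes its top-left block equal to `0 1 / 2 3`. Hence the number of
grids is `4!` times the number of grids with that top-left block (`sudokuEquiv`).

Four distinct elements of `Fin 4` sum to `0 + 1 + 2 + 3 = 2` modulo `4`. So a reduced grid is
determined by the five entries at `(0, 2)`, `(1, 2)`, `(2, 0)`, `(2, 1)`, `(2, 2)`, the other entries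
being affine functions of these (`eq_fill`). Testing the `4 ^ 5` candidates leaves `12` reduced grids
(`card_completions`), and `24 * 12 = 288`.
-/

namespace Sudoku2

theorem two_mul_add_lt (b i : Fin 2) : 2 * b.val + i.val < 4 := by
  omega

/-- The cell at position `p` of the block `(bi, bj)`. -/
abbrev cell (bi bj : Fin 2) (p : Fin 2 × Fin 2) : Fin 4 × Fin 4 :=
  (⟨2 * bi.val + p.1.val, two_mul_add_lt bi p.1⟩, ⟨2 * bj.val + p.2.val, two_mul_add_lt bj p.2⟩)

/-- Every row, every column and every `2 × 2` block of `f` contains each value exactly once. -/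
def IsSudoku (f : Fin 4 × Fin 4 → Fin 4) : Prop :=
  (∀ r : Fin 4, Function.Bijective (fun c : Fin 4 => f (r, c))) ∧
  (∀ c : Fin 4, Function.Bijective (fun r : Fin 4 => f (r, c))) ∧
  (∀ bi bj : Fin 2, Function.Bijective (fun p : Fin 2 × Fin 2 => f (cell bi bj p)))

/-- The top-left block of `f` reads `0 1 / 2 3`. -/
def IsReduced (f : Fin 4 × Fin 4 → Fin 4) : Prop :=
  ∀ p : Fin 2 × Fin 2, f (cell 0 0 p) = finProdFinEquiv p

theorem IsSudoku.relabel {f : Fin 4 × Fin 4 → Fin 4} (hf : IsSudoku f)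
    (σ : Equiv.Perm (Fin 4)) : IsSudoku (σ ∘ f) :=
  ⟨fun r => σ.bijective.comp (hf.1 r), fun c => σ.bijective.comp (hf.2.1 c),
    fun bi bj => σ.bijective.comp (hf.2.2 bi bj)⟩

/-- The permutation listing the entries of the top-left block of a grid, row by row. -/
noncomputable def label (f : {f // IsSudoku f}) : Equiv.Perm (Fin 4) :=
  finProdFinEquiv.symm.trans (Equiv.ofBijective _ (f.2.2.2 0 0))

theorem label_apply (f : {f // IsSudoku f}) (p : Fin 2 × Fin 2) :
    label f (finProdFinEquiv p) = f.1 (cell 0 0 p) := by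
  simp only [label, Equiv.trans_apply, Equiv.symm_apply_apply, Equiv.ofBijective_apply]

/-- A grid is the same thing as a relabelling together with a reduced grid. -/
noncomputable def sudokuEquiv :
    {f // IsSudoku f} ≃ Equiv.Perm (Fin 4) × {g // IsSudoku g ∧ IsReduced g} where
  toFun f := (label f, ⟨(label f).symm ∘ f.1, f.2.relabel _, fun p => by
    rw [Function.comp_apply, ← label_apply, Equiv.symm_apply_apply]⟩)
  invFun x := ⟨x.1 ∘ x.2.1, x.2.2.1.relabel _⟩
  left_inv f := by
    ext c
    simp
  right_inv := by
    rintro ⟨σ, g, hg, hr⟩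
    have h : label ⟨σ ∘ g, hg.relabel σ⟩ = σ := by
      ext k : 1
      obtain ⟨p, rfl⟩ := (finProdFinEquiv (m := 2) (n := 2)).surjective k
      rw [label_apply, ← hr p]
      rfl
    refine Prod.ext h (Subtype.ext ?_)
    ext c : 1
    simp [h]

/-- The four values are pairwise different. -/
def Distinct (a b c d : Fin 4) : Prop :=
  a ≠ b ∧ a ≠ c ∧ a ≠ d ∧ b ≠ c ∧ b ≠ d ∧ c ≠ d

instance (a b c d : Fin 4) : Decidable (Distinct a b c d) := by
  unfold Distinct
  infer_instance

theorem Distinct.sum_eq : ∀ {a b c d : Fin 4}, Distinct a b c d → a + b + c + d = 2 := by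
  decide

theorem bijective_iff (g : Fin 4 → Fin 4) :
    Function.Bijective g ↔ Distinct (g 0) (g 1) (g 2) (g 3) := by
  rw [← Finite.injective_iff_bijective]
  constructor
  · intro h
    refine ⟨?_, ?_, ?_, ?_, ?_, ?_⟩ <;> exact h.ne (by decide)
  · rintro ⟨h1, h2, h3, h4, h5, h6⟩ i j hij
    fin_cases i <;> fin_cases j <;> simp_all

theorem bijective_block_iff (g : Fin 2 × Fin 2 → Fin 4) :
    Function.Bijective g ↔ Distinct (g (0, 0)) (g (0, 1)) (g (1, 0)) (g (1, 1)) := by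
  rw [← Function.Bijective.of_comp_iff g finProdFinEquiv.symm.bijective, bijective_iff]
  rfl

/-- The Su-Doku conditions as explicit inequalities between entries, a form that can be evaluated
quickly. -/
def Check (f : Fin 4 × Fin 4 → Fin 4) : Prop :=
  (Distinct (f (0, 0)) (f (0, 1)) (f (0, 2)) (f (0, 3)) ∧
   Distinct (f (1, 0)) (f (1, 1)) (f (1, 2)) (f (1, 3)) ∧
   Distinct (f (2, 0)) (f (2, 1)) (f (2, 2)) (f (2, 3)) ∧
   Distinct (f (3, 0)) (f (3, 1)) (f (3, 2)) (f (3, 3))) ∧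
  (Distinct (f (0, 0)) (f (1, 0)) (f (2, 0)) (f (3, 0)) ∧
   Distinct (f (0, 1)) (f (1, 1)) (f (2, 1)) (f (3, 1)) ∧
   Distinct (f (0, 2)) (f (1, 2)) (f (2, 2)) (f (3, 2)) ∧
   Distinct (f (0, 3)) (f (1, 3)) (f (2, 3)) (f (3, 3))) ∧
  (Distinct (f (0, 0)) (f (0, 1)) (f (1, 0)) (f (1, 1)) ∧
   Distinct (f (0, 2)) (f (0, 3)) (f (1, 2)) (f (1, 3))) ∧
  (Distinct (f (2, 0)) (f (2, 1)) (f (3, 0)) (f (3, 1)) ∧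
   Distinct (f (2, 2)) (f (2, 3)) (f (3, 2)) (f (3, 3)))

instance : DecidablePred Check := fun f => by
  unfold Check
  infer_instance

theorem forall_fin_four {P : Fin 4 → Prop} : (∀ i, P i) ↔ P 0 ∧ P 1 ∧ P 2 ∧ P 3 :=
  ⟨fun h => ⟨h 0, h 1, h 2, h 3⟩, fun ⟨h0, h1, h2, h3⟩ i => by
    fin_cases i <;> assumption⟩

theorem isSudoku_iff_check (f : Fin 4 × Fin 4 → Fin 4) : IsSudoku f ↔ Check f := by
  unfold IsSudoku
  simp only [bijective_iff, bijective_block_iff, forall_fin_four, Fin.forall_fin_two]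
  rfl

/-- The reduced grid with entries `a`, `b`, `c`, `d`, `w` at `(0, 2)`, `(1, 2)`, `(2, 0)`, `(2, 1)`,
`(2, 2)`; the other entries are those forced by the row, column and block sums being `2`. -/
def fill (t : Fin 4 × Fin 4 × Fin 4 × Fin 4 × Fin 4) : Fin 4 × Fin 4 → Fin 4 :=
  let (a, b, c, d, w) := t
  fun x => (![![0, 1, a, 1 - a],
    ![2, 3, b, 1 - b],
    ![c, d, w, 2 - c - d - w],
    ![-c, 2 - d, 2 - a - b - w, a + b + c + d + w - 2]] : Fin 4 → Fin 4 → Fin 4) x.1 x.2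

/-- The five entries which determine a reduced grid. -/
def seed (f : Fin 4 × Fin 4 → Fin 4) : Fin 4 × Fin 4 × Fin 4 × Fin 4 × Fin 4 :=
  (f (0, 2), f (1, 2), f (2, 0), f (2, 1), f (2, 2))

theorem seed_fill (t : Fin 4 × Fin 4 × Fin 4 × Fin 4 × Fin 4) : seed (fill t) = t := rfl

theorem isReduced_fill (t : Fin 4 × Fin 4 × Fin 4 × Fin 4 × Fin 4) : IsReduced (fill t) := by
  rintro ⟨i, j⟩
  fin_cases i <;> fin_cases j <;> rfl

theorem eq_fill {f : Fin 4 × Fin 4 → Fin 4} (hf : IsSudoku f) (hr : IsReduced f) :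
    fill (seed f) = f := by
  obtain ⟨⟨r0, r1, r2, -⟩, ⟨c0, c1, c2, -⟩, -, -, b3⟩ := (isSudoku_iff_check f).1 hf
  have h00 : f (0, 0) = 0 := hr (0, 0)
  have h01 : f (0, 1) = 1 := hr (0, 1)
  have h10 : f (1, 0) = 2 := hr (1, 0)
  have h11 : f (1, 1) = 3 := hr (1, 1)
  have r0 := r0.sum_eq
  have r1 := r1.sum_eq
  have r2 := r2.sum_eq
  have c0 := c0.sum_eq
  have c1 := c1.sum_eq
  have c2 := c2.sum_eq
  have b3 := b3.sum_eq
  rw [h00, h01] at r0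
  rw [h10, h11] at r1
  rw [h00, h10] at c0
  rw [h01, h11] at c1
  have h03 : 1 - f (0, 2) = f (0, 3) := by grind
  have h13 : 1 - f (1, 2) = f (1, 3) := by grind
  have h23 : 2 - f (2, 0) - f (2, 1) - f (2, 2) = f (2, 3) := by grind
  have h30 : -f (2, 0) = f (3, 0) := by grind
  have h31 : 2 - f (2, 1) = f (3, 1) := by grind
  have h32 : 2 - f (0, 2) - f (1, 2) - f (2, 2) = f (3, 2) := by grind
  have h33 : f (0, 2) + f (1, 2) + f (2, 0) + f (2, 1) + f (2, 2) - 2 = f (3, 3) := by grind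
  ext ⟨i, j⟩ : 1
  fin_cases i <;> fin_cases j
  exacts [h00.symm, h01.symm, rfl, h03, h10.symm, h11.symm, rfl, h13, rfl, rfl, rfl, h23,
    h30, h31, h32, h33]

/-- A reduced grid is the same thing as a seed whose forced completion is a Su-Doku grid. -/
def reducedEquiv :
    {g // IsSudoku g ∧ IsReduced g} ≃
      {t : Fin 4 × Fin 4 × Fin 4 × Fin 4 × Fin 4 // Check (fill t)} where
  toFun g := ⟨seed g.1, by
    rw [eq_fill g.2.1 g.2.2]
    exact (isSudoku_iff_check _).1 g.2.1⟩
  invFun t := ⟨fill t.1, (isSudoku_iff_check _).2 t.2, isReduced_fill _⟩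
  left_inv g := Subtype.ext (eq_fill g.2.1 g.2.2)
  right_inv _ := rfl

theorem card_completions :
    Fintype.card {t : Fin 4 × Fin 4 × Fin 4 × Fin 4 × Fin 4 // Check (fill t)} = 12 := by
  decide +kernel

end Sudoku2

/-- The number of size-2 Su-Doku grids (4×4 grids where each row, column and
2×2 corner block is a bijection onto `Fin 4`) is 288. -/
theorem sudoku2_count :
    Nat.card {f : Fin 4 × Fin 4 → Fin 4 //
      (∀ r : Fin 4, Function.Bijective (fun c : Fin 4 => f (r, c))) ∧
      (∀ c : Fin 4, Function.Bijective (fun r : Fin 4 => f (r, c))) ∧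
      (∀ bi bj : Fin 2, Function.Bijective (fun p : Fin 2 × Fin 2 =>
        f (⟨2 * bi.val + p.1.val, by have := bi.isLt; have := p.1.isLt; omega⟩,
           ⟨2 * bj.val + p.2.val, by have := bj.isLt; have := p.2.isLt; omega⟩)))} = 288 := by
  change Nat.card {f // Sudoku2.IsSudoku f} = 288
  rw [Nat.card_congr Sudoku2.sudokuEquiv, Nat.card_prod, Nat.card_congr Sudoku2.reducedEquiv,
    Nat.card_eq_fintype_card, Nat.card_eq_fintype_card, Sudoku2.card_completions,
    Fintype.card_perm, Fintype.card_fin]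
  rfl
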